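/- Let G be a finite group, M an abelian normal subgroup, and ψ ∈ Irr(G) with M not contained in ker(ψ). Let P be a subgroup with PM ≤ G, and suppose d = min{|P : I_P(λ)| : 1 ≠ λ ∈ Irr(M)} divides θ(1) for every θ ∈ Irr(PM) with M ⊄ ker(θ). Then d divides ψ(1). -/

import Mathlib

open CategoryTheory

/-- The inertia group `I_P(λ) ≤ P` of a character `λ` of a normal subgroup `M ⊴ G`,
under the conjugation action of a subgroup `P ≤ G`. -/
def inertiaIn {G : Type*} [Group G] (P M : Subgroup G) [hM : M.Normal] {k : Type*}
    (l : M → k) : Subgroup P where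
  carrier := {x | ∀ m : M, l ⟨(x : G) * m * (x : G)⁻¹, hM.conj_mem m.1 m.2 x⟩ = l m}
  one_mem' := by
    intro m
    congr 1
    ext
    simp
  mul_mem' := by
    intro a b ha hb m
    have h1 := ha ⟨(b : G) * m * (b : G)⁻¹, hM.conj_mem m.1 m.2 b⟩
    have h2 := hb m
    have key : (⟨((a * b : P) : G) * m * ((a * b : P) : G)⁻¹,
        hM.conj_mem m.1 m.2 (a * b)⟩ : M) =
        ⟨(a : G) * ((b : G) * m * (b : G)⁻¹) * (a : G)⁻¹,
        hM.conj_mem _ (hM.conj_mem m.1 m.2 b) a⟩ := by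
      ext
      push_cast
      group
    rw [key, h1, h2]
  inv_mem' := by
    intro a ha m
    have h1 := ha ⟨(a : G)⁻¹ * m * (a : G), by
      simpa using hM.conj_mem m.1 m.2 (a : G)⁻¹⟩
    convert h1.symm using 2 <;> ext <;> push_cast <;> (try simp) <;> group

/-!
No irreducible `PM`-subquotient `W` of `ψ` has `M` in its kernel. Indeed, the `M`-fixed vectors form
a `G`-subrepresentation of the irreducible `ψ`, so there are none except `0`; as `|M|` is
invertible, averaging over `M` lifts fixed vectors along surjections, so this persists in every
`PM`-subquotient. Hence `d` divides the dimension of each irreducible constituent of the restriction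
of `ψ` to `PM`, and these dimensions add up to `ψ(1)`.
-/

open Module Representation

universe u v w

section Simple

variable {k : Type u} {G : Type v} [Field k] [Monoid G]

lemma exists_ne_bot_ne_top_of_not_isIrreducible {V : Type*} [AddCommGroup V] [Module k V]
    [Nontrivial V] {ρ : Representation k G V} (hρ : ¬ ρ.IsIrreducible) :
    ∃ S : Subrepresentation ρ, S.toSubmodule ≠ ⊥ ∧ S.toSubmodule ≠ ⊤ := by
  contrapose! hρ
  have : Nontrivial (Subrepresentation ρ) :=
    ⟨⊥, ⊤, fun h ↦ bot_ne_top (α := Submodule k V) congr(($h).toSubmodule)⟩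
  refine ⟨fun S ↦ or_iff_not_imp_left.mpr fun hS ↦ Subrepresentation.toSubmodule_injective ?_⟩
  exact hρ S fun h ↦ hS (Subrepresentation.toSubmodule_injective h)

lemma fdRep_mono_iff_injective {V W : FDRep k G} (f : V ⟶ W) :
    Mono f ↔ Function.Injective f.hom := by
  let F := Action.forget (FGModuleCat k) G ⋙ forget₂ (FGModuleCat k) (ModuleCat k)
  exact (F.mono_map_iff_mono f).symm.trans (ModuleCat.mono_iff_injective (F.map f))

lemma fdRep_isIso_iff_bijective {V W : FDRep k G} (f : V ⟶ W) :
    IsIso f ↔ Function.Bijective f.hom := by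
  refine ⟨fun _ ↦ (FDRep.isoToLinearEquiv (asIso f)).bijective, fun hf ↦ ?_⟩
  have : IsIso f.hom := (LinearEquiv.ofBijective f.hom.hom.hom hf).toFGModuleCatIso.isIso_hom
  exact Action.isIso_of_hom_isIso f

lemma isIrreducible_of_simple (V : FDRep k G) [Simple V] : IsIrreducible V.ρ := by
  have : Nontrivial V := by
    by_contra! hV
    exact id_nonzero V (by ext v; exact Subsingleton.elim _ _)
  by_contra hirr
  obtain ⟨S, hbot, htop⟩ := exists_ne_bot_ne_top_of_not_isIrreducible (ρ := V.ρ) hirr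
  let incl : FDRep.of S.toRepresentation ⟶ V :=
    ⟨InducedCategory.homMk (ModuleCat.ofHom S.toSubmodule.subtype), fun _ ↦ by ext1; rfl⟩
  have : Mono incl := (fdRep_mono_iff_injective incl).mpr Subtype.val_injective
  have hne : incl ≠ 0 := fun h ↦ hbot <| (Submodule.eq_bot_iff _).mpr fun v hv ↦
    congr(($h).hom ⟨v, hv⟩)
  have hbij := (fdRep_isIso_iff_bijective incl).mp (isIso_of_mono_of_nonzero hne)
  refine htop <| Submodule.eq_top_iff'.mpr fun v ↦ ?_
  obtain ⟨w, rfl⟩ := hbij.surjective v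
  exact w.2

lemma simple_of_isIrreducible (V : FDRep k G) [IsIrreducible V.ρ] : Simple V where
  mono_isIso_iff_nonzero {W} f hf := by
    let φ : IntertwiningMap W.ρ V.ρ :=
      ⟨f.hom.hom.hom, fun g ↦ congr(InducedCategory.Hom.hom $(f.comm g) |>.hom)⟩
    rw [fdRep_isIso_iff_bijective]
    refine ⟨?_, fun hne ↦ ⟨(fdRep_mono_iff_injective f).mp hf, ?_⟩⟩
    · rintro hbij rfl
      have : Subsingleton V := subsingleton_of_forall_eq 0 fun v ↦
        (hbij.surjective v).elim fun _ hw ↦ hw.symm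
      exact bot_ne_top (α := Subrepresentation V.ρ)
        (Subrepresentation.toSubmodule_injective (Subsingleton.elim _ _))
    · refine (IsIrreducible.surjective_or_eq_zero φ).resolve_right fun hφ ↦ hne ?_
      ext w
      exact congr($hφ w)

lemma simple_iff_isIrreducible (V : FDRep k G) : Simple V ↔ IsIrreducible V.ρ :=
  ⟨fun _ ↦ isIrreducible_of_simple V, fun _ ↦ simple_of_isIrreducible V⟩

end Simple

section Invariants

variable {k : Type*} {G : Type*} {V : Type*} {W : Type*} [Field k] [Group G]
  [AddCommGroup V] [Module k V] [AddCommGroup W] [Module k W]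
  {ρ : Representation k G V} {σ : Representation k G W}

lemma invariants_eq_bot_of_injective (f : IntertwiningMap ρ σ) (hf : Function.Injective f)
    (hσ : invariants σ = ⊥) : invariants ρ = ⊥ := by
  refine (Submodule.eq_bot_iff _).mpr fun v hv ↦ hf ?_
  have hfv : f v ∈ invariants σ := fun g ↦ by rw [← f.isIntertwining, hv g]
  rwa [hσ, Submodule.mem_bot, ← map_zero f] at hfv

lemma invariants_eq_bot_of_surjective [NeZero (Nat.card G : k)] (f : IntertwiningMap ρ σ)
    (hf : Function.Surjective f) (hρ : invariants ρ = ⊥) : invariants σ = ⊥ := by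
  have hcard : (Nat.card G : k) ≠ 0 := NeZero.ne _
  have : Finite G := Nat.finite_of_card_ne_zero fun h ↦ hcard (by simp [h])
  have : Fintype G := Fintype.ofFinite G
  refine (Submodule.eq_bot_iff _).mpr fun w hw ↦ ?_
  obtain ⟨v, rfl⟩ := hf w
  have hnorm : ρ.norm v = 0 := by
    rw [← Submodule.mem_bot k, ← hρ]
    exact fun g ↦ self_norm_apply ρ g v
  have hsmul : (Nat.card G : k) • f v = 0 := calc
    (Nat.card G : k) • f v = ∑ g : G, σ g (f v) := by
      simp [(mem_invariants σ _).mp hw, Nat.cast_smul_eq_nsmul]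
    _ = f (ρ.norm v) := by simp [Representation.norm, f.isIntertwining]
    _ = 0 := by rw [hnorm, map_zero]
  exact (smul_eq_zero.mp hsmul).resolve_left hcard

lemma invariants_comp_subtype_eq_top_iff (ρ : Representation k G V) (N : Subgroup G) :
    invariants (ρ.comp N.subtype) = ⊤ ↔ N ≤ ρ.ker := by
  simp only [Submodule.eq_top_iff', mem_invariants, SetLike.le_def, MonoidHom.mem_ker,
    LinearMap.ext_iff]
  exact ⟨fun h n hn v ↦ h v ⟨n, hn⟩, fun h v n ↦ h n.2 v⟩

lemma invariants_comp_subtype_eq_bot (ρ : Representation k G V) [hρ : ρ.IsIrreducible]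
    (N : Subgroup G) [N.Normal] (hN : ¬ N ≤ ρ.ker) : invariants (ρ.comp N.subtype) = ⊥ := by
  let fixed : Subrepresentation ρ :=
    ⟨invariants (ρ.comp N.subtype), fun g _ hv ↦ le_comap_invariants ρ N g hv⟩
  rcases eq_bot_or_eq_top fixed with h | h
  · exact congrArg Subrepresentation.toSubmodule h
  · exact absurd
      ((invariants_comp_subtype_eq_top_iff ρ N).mp (congrArg Subrepresentation.toSubmodule h)) hN

end Invariants

section Divisibility

variable {k : Type u} {H : Type v} [Field k] [Group H]

theorem dvd_finrank_of_invariants_eq_bot (N : Subgroup H) [NeZero (Nat.card N : k)] (d : ℕ)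
    (hd : ∀ {W : Type w} [AddCommGroup W] [Module k W] [FiniteDimensional k W]
      (σ : Representation k H W), σ.IsIrreducible → ¬ N ≤ σ.ker → d ∣ finrank k W)
    {V : Type w} [AddCommGroup V] [Module k V] [FiniteDimensional k V]
    (ρ : Representation k H V) (hρ : invariants (ρ.comp N.subtype) = ⊥) : d ∣ finrank k V := by
  induction hn : finrank k V using Nat.strong_induction_on generalizing V with | _ n ih
  rw [← hn] at ih ⊢
  rcases subsingleton_or_nontrivial V with _ | _
  · simp [finrank_zero_of_subsingleton]
  by_cases hirr : ρ.IsIrreducible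
  · refine hd ρ hirr fun hker ↦ ?_
    rw [← invariants_comp_subtype_eq_top_iff, hρ] at hker
    exact bot_ne_top hker
  obtain ⟨S, hbot, htop⟩ := exists_ne_bot_ne_top_of_not_isIrreducible hirr
  let quot := ρ.quotient S.toSubmodule S.apply_mem_toSubmodule
  let incl : IntertwiningMap (S.toRepresentation.comp N.subtype) (ρ.comp N.subtype) :=
    ⟨S.toSubmodule.subtype, fun _ ↦ rfl⟩
  let proj : IntertwiningMap (ρ.comp N.subtype) (quot.comp N.subtype) :=
    ⟨S.toSubmodule.mkQ, fun _ ↦ rfl⟩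
  have hsum := S.toSubmodule.finrank_quotient_add_finrank
  have hpos : 0 < finrank k S.toSubmodule :=
    Nat.pos_of_ne_zero (mt Submodule.finrank_eq_zero.mp hbot)
  have hlt : finrank k S.toSubmodule < finrank k V := Submodule.finrank_lt htop
  rw [← hsum]
  exact dvd_add
    (ih _ (by lia) quot
      (invariants_eq_bot_of_surjective proj (Submodule.mkQ_surjective _) hρ) rfl)
    (ih _ hlt S.toRepresentation
      (invariants_eq_bot_of_injective incl Subtype.val_injective hρ) rfl)

end Divisibility

section Character

variable {k G V : Type*} [Field k] [CharZero k] [Group G] [AddCommGroup V] [Module k V]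
  [FiniteDimensional k V]

lemma invariants_eq_top_of_character_eq [Finite G] (ρ : Representation k G V)
    (h : ∀ g, ρ.character g = ρ.character 1) : invariants ρ = ⊤ := by
  have : Fintype G := Fintype.ofFinite G
  have hcard : (Nat.card G : k) ≠ 0 := NeZero.ne _
  have : Invertible (Nat.card G : k) := invertibleOfNonzero hcard
  refine Submodule.eq_top_of_finrank_eq (Nat.cast_injective (R := k) ?_)
  rw [← card_inv_mul_sum_char_eq_finrank]
  simp [h, ← Nat.card_eq_fintype_card, hcard]

lemma exists_character_ne_iff_not_le_ker (ρ : Representation k G V) (N : Subgroup G) [Finite N] :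
    (∃ n ∈ N, ρ.character n ≠ ρ.character 1) ↔ ¬ N ≤ ρ.ker := by
  refine ⟨fun ⟨n, hn, hne⟩ hN ↦ hne ?_, fun hN ↦ ?_⟩
  · rw [character, character, MonoidHom.mem_ker.mp (hN hn), map_one ρ]
  · contrapose! hN
    rw [← invariants_comp_subtype_eq_top_iff]
    exact invariants_eq_top_of_character_eq _ fun n ↦ hN n n.2

end Character

theorem min_inertia_index_divides_degree_general {k : Type u} {G : Type v} [Field k] [Group G]
    (M H : Subgroup G) [M.Normal] [NeZero (Nat.card M : k)] (hMH : M ≤ H)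
    (V : FDRep k G) (hV : Simple V) (hker : ¬ M ≤ V.ρ.ker) (d : ℕ)
    (hdiv : ∀ W : FDRep k H, Simple W → ¬ M.subgroupOf H ≤ W.ρ.ker → d ∣ finrank k W) :
    d ∣ finrank k V := by
  have : IsIrreducible V.ρ := (simple_iff_isIrreducible V).mp hV
  have : NeZero (Nat.card (M.subgroupOf H) : k) := by
    rwa [Nat.card_congr (Subgroup.subgroupOfEquivOfLe hMH).toEquiv]
  refine dvd_finrank_of_invariants_eq_bot (M.subgroupOf H) d
    (fun σ hσ ↦ hdiv (FDRep.of σ) ((simple_iff_isIrreducible _).mpr hσ))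
    (V.ρ.comp H.subtype) ?_
  refine (Submodule.eq_bot_iff _).mpr fun v hv ↦ ?_
  rw [← Submodule.mem_bot k, ← invariants_comp_subtype_eq_bot V.ρ M hker]
  exact fun m ↦ hv ⟨⟨m, hMH m.2⟩, m.2⟩

/-- Let `M ⊴ G` be abelian, `ψ ∈ Irr(G)` with `M ⊄ ker ψ`, and `P ≤ G`.
Suppose `d = min { |P : I_P(λ)| : 1 ≠ λ ∈ Irr(M) }` divides `θ(1)` for every
`θ ∈ Irr(PM)` with `M ⊄ ker θ`.  Then `d` divides `ψ(1)`. -/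
theorem min_inertia_index_divides_degree
    {G : Type} [Group G] [Fintype G] (M : Subgroup G) [M.Normal]
    (hMab : ∀ a ∈ M, ∀ b ∈ M, a * b = b * a)
    (P : Subgroup G)
    (V : FDRep ℂ G) (hV : Simple V)
    (hker : ∃ m ∈ M, V.character m ≠ V.character 1)
    (d : ℕ)
    (hd : d = sInf {c : ℕ | ∃ l : M →* ℂ, (∃ m : M, l m ≠ 1) ∧
      c = (inertiaIn P M (⇑l)).index})
    (hdiv : ∀ W : FDRep ℂ ((P ⊔ M : Subgroup G)), Simple W →
      (∃ m : G, ∃ hm : m ∈ M,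
        W.character ⟨m, (le_sup_right : M ≤ P ⊔ M) hm⟩ ≠ W.character 1) →
      d ∣ Module.finrank ℂ W) :
    d ∣ Module.finrank ℂ V := by
  refine min_inertia_index_divides_degree_general M (P ⊔ M) le_sup_right V hV
    ((exists_character_ne_iff_not_le_ker V.ρ M).mp hker) d fun W hW hMW ↦ hdiv W hW ?_
  obtain ⟨m, hm, hne⟩ := (exists_character_ne_iff_not_le_ker W.ρ _).mpr hMW
  exact ⟨m, hm, hne⟩
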